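/- arXiv:1704.07677 — 4 statements merged into one kernel-verified Lean document; each statement's English description precedes it below -/
import Mathlib

section
/- Let A be a modal formula and let t be a translation for A based on a sequence Q of atoms not occurring in A. If GL ⊢ A^t, then K4 ⊢ A. -/
/-! ### Modal formulas -/

inductive MF : Type
  | atom : ℕ → MF
  | bot  : MF
  | and  : MF → MF → MF
  | or   : MF → MF → MF
  | imp  : MF → MF → MF
  | neg  : MF → MF
  | box  : MF → MF
  deriving DecidableEq

namespace MF

/-- The set of atoms occurring in a modal formula. -/
def atoms : MF → Set ℕ
  | atom n => {n}
  | bot => ∅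
  | and A B => atoms A ∪ atoms B
  | or A B => atoms A ∪ atoms B
  | imp A B => atoms A ∪ atoms B
  | neg A => atoms A
  | box A => atoms A

/-- A boolean valuation on modal formulas respecting the classical connectives
(boxed formulas and atoms are treated as arbitrary). -/
def Respects (v : MF → Bool) : Prop :=
  v bot = false ∧
  (∀ A B, v (and A B) = (v A && v B)) ∧
  (∀ A B, v (or A B) = (v A || v B)) ∧
  (∀ A B, v (imp A B) = (!(v A) || v B)) ∧
  (∀ A, v (neg A) = !(v A))

/-- Classical propositional tautology (in the modal language). -/
def IsTaut (A : MF) : Prop := ∀ v, Respects v → v A = true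

end MF

/-- Hilbert-style provability in the normal modal logic `K` extended by the
axiom scheme `Ax`: classical tautologies, scheme K, the extra axioms,
modus ponens and necessitation. -/
inductive Prv (Ax : MF → Prop) : MF → Prop
  | taut {A : MF} : MF.IsTaut A → Prv Ax A
  | axK {A B : MF} : Prv Ax ((MF.box (A.imp B)).imp ((MF.box A).imp (MF.box B)))
  | extra {A : MF} : Ax A → Prv Ax A
  | mp {A B : MF} : Prv Ax (A.imp B) → Prv Ax A → Prv Ax B
  | nec {A : MF} : Prv Ax A → Prv Ax A.box

/-- Scheme 4 : □A → □□A. -/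
def Ax4 (A : MF) : Prop := ∃ B, A = (MF.box B).imp (MF.box (MF.box B))
/-- Scheme T : □A → A. -/
def AxT (A : MF) : Prop := ∃ B, A = (MF.box B).imp B
/-- Scheme D : ¬□⊥. -/
def AxD (A : MF) : Prop := A = MF.neg (MF.box MF.bot)
/-- Löb's scheme L : □(□A→A) → □A. -/
def AxGL (A : MF) : Prop := ∃ B, A = (MF.box ((MF.box B).imp B)).imp (MF.box B)

def AxK4  : MF → Prop := Ax4
def AxKD4 : MF → Prop := fun A => Ax4 A ∨ AxD A
def AxS4  : MF → Prop := fun A => Ax4 A ∨ AxT A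

def PrvK   : MF → Prop := Prv (fun _ => False)
def PrvK4  : MF → Prop := Prv AxK4
def PrvKD4 : MF → Prop := Prv AxKD4
def PrvS4  : MF → Prop := Prv AxS4
def PrvGL  : MF → Prop := Prv AxGL

/-- Conjunction of a finite list of modal formulas (empty conjunction is ⊤ := ⊥→⊥). -/
def conjL (l : List MF) : MF := l.foldr MF.and (MF.imp MF.bot MF.bot)

/-- `ModalConseq Ax Γ A` : there are B₁,…,Bₙ ∈ Γ with ⊢ (B₁∧…∧Bₙ)→A in K + Ax. -/
def ModalConseq (Ax : MF → Prop) (Γ : Set MF) (A : MF) : Prop :=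
  ∃ l : List MF, (∀ B ∈ l, B ∈ Γ) ∧ Prv Ax ((conjL l).imp A)

/-! ### Annotated modal formulas and translations -/

/-- Modal formulas with every occurrence of □ annotated by a natural number. -/
inductive AMF : Type
  | atom : ℕ → AMF
  | bot  : AMF
  | and  : AMF → AMF → AMF
  | or   : AMF → AMF → AMF
  | imp  : AMF → AMF → AMF
  | neg  : AMF → AMF
  | box  : ℕ → AMF → AMF

namespace AMF

/-- Forget the annotations. -/
def erase : AMF → MF
  | atom n => .atom n
  | bot => .bot
  | and A B => .and (erase A) (erase B)
  | or A B => .or (erase A) (erase B)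
  | imp A B => .imp (erase A) (erase B)
  | neg A => .neg (erase A)
  | box _ A => .box (erase A)

/-- The list of all annotations occurring in an annotated formula. -/
def labels : AMF → List ℕ
  | atom _ => []
  | bot => []
  | and A B => labels A ++ labels B
  | or A B => labels A ++ labels B
  | imp A B => labels A ++ labels B
  | neg A => labels A
  | box n A => n :: labels A

/-- A translation is ordered when the number assigned to each box is strictly
greater than all numbers assigned to boxes in its scope. -/
def Ordered : AMF → Prop
  | atom _ => True
  | bot => True
  | and A B => Ordered A ∧ Ordered B
  | or A B => Ordered A ∧ Ordered B
  | imp A B => Ordered A ∧ Ordered B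
  | neg A => Ordered A
  | box n A => Ordered A ∧ ∀ m ∈ labels A, m < n

end AMF

/-- `conjQ q n` is the conjunction q₀ ∧ … ∧ q_n of the atoms `q i`. -/
def conjQ (q : ℕ → ℕ) : ℕ → MF
  | 0 => .atom (q 0)
  | n+1 => (conjQ q n).and (.atom (q (n+1)))

/-- The formula `A^t`: commutes with connectives and `(□B)^t = □(q₀∧…∧q_n → B^t)`
where `n` is the annotation on that box. -/
def AMF.trans (q : ℕ → ℕ) : AMF → MF
  | .atom n => .atom n
  | .bot => .bot
  | .and A B => (trans q A).and (trans q B)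
  | .or A B => (trans q A).or (trans q B)
  | .imp A B => (trans q A).imp (trans q B)
  | .neg A => (trans q A).neg
  | .box n A => .box ((conjQ q n).imp (trans q A))

/-! ### Kripke semantics -/

/-- Classical Kripke forcing for modal formulas. -/
def Forces {W : Type} (R : W → W → Prop) (V : ℕ → W → Prop) : W → MF → Prop
  | w, .atom n => V n w
  | _, .bot => False
  | w, .and A B => Forces R V w A ∧ Forces R V w B
  | w, .or A B => Forces R V w A ∨ Forces R V w B
  | w, .imp A B => Forces R V w A → Forces R V w B
  | w, .neg A => ¬ Forces R V w A
  | w, .box A => ∀ u, R w u → Forces R V u A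

/-- Cluster equivalence: `x = y`, or `x R y` and `y R x`. -/
def ClusterEq {W : Type} (R : W → W → Prop) (x y : W) : Prop :=
  x = y ∨ (R x y ∧ R y x)

/-- A transitive frame whose clusters form a tree and in which every cluster is
a single irreflexive point or a nonempty set of reflexive points. -/
structure TreeWithClusters {W : Type} (R : W → W → Prop) : Prop where
  trans : Transitive R
  rooted : ∃ r, ∀ x, ClusterEq R r x ∨ R r x
  treelike : ∀ x y z, R x z → R y z → (ClusterEq R x y ∨ R x y ∨ R y x)
  cluster_irrefl_singleton : ∀ x, ¬ R x x → ∀ y, ClusterEq R x y → y = x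
  cluster_homog : ∀ x y, ClusterEq R x y → (R x x → R y y)

/-! ### Expansions -/

/-- `Expansion A B` : `B ∈ E(A)`, the set of expansions of `A`. -/
inductive Expansion : MF → MF → Prop
  | atom (n) : Expansion (.atom n) (.atom n)
  | bot : Expansion .bot .bot
  | and {A B D E : MF} : Expansion A D → Expansion B E → Expansion (A.and B) (D.and E)
  | or {A B D E : MF} : Expansion A D → Expansion B E → Expansion (A.or B) (D.or E)
  | imp {A B D E : MF} : Expansion A D → Expansion B E → Expansion (A.imp B) (D.imp E)
  | neg {A D : MF} : Expansion A D → Expansion A.neg D.neg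
  | box {A D : MF} (l : List MF) : Expansion A D → (∀ E ∈ l, Expansion A E) →
      Expansion A.box (MF.box (l.foldr MF.or D))

/-! ### Propositional formulas and Visser-style natural deduction -/

inductive PF : Type
  | atom : ℕ → PF
  | bot  : PF
  | and  : PF → PF → PF
  | or   : PF → PF → PF
  | imp  : PF → PF → PF
  deriving DecidableEq

def PF.top : PF := .imp .bot .bot
def PF.neg (A : PF) : PF := A.imp .bot

/-- Natural deduction derivability from a set of assumptions.  `ef` switches
the ex falso rule on/off; `Rule` is an additional rule given as a relation
between a list of premises and a conclusion.  The base system (with `ef`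
and no extra rule) is Visser's BPC: ∧/∨ intro and elim, →I (discharging),
ex falso, and the formalized rules; no modus ponens. -/
inductive Deriv (ef : Prop) (Rule : List PF → PF → Prop) : Set PF → PF → Prop
  | hyp {Γ : Set PF} {A : PF} : A ∈ Γ → Deriv ef Rule Γ A
  | andI {Γ : Set PF} {A B : PF} : Deriv ef Rule Γ A → Deriv ef Rule Γ B → Deriv ef Rule Γ (A.and B)
  | andE1 {Γ : Set PF} {A B : PF} : Deriv ef Rule Γ (A.and B) → Deriv ef Rule Γ A
  | andE2 {Γ : Set PF} {A B : PF} : Deriv ef Rule Γ (A.and B) → Deriv ef Rule Γ B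
  | orI1 {Γ : Set PF} {A B : PF} : Deriv ef Rule Γ A → Deriv ef Rule Γ (A.or B)
  | orI2 {Γ : Set PF} {A B : PF} : Deriv ef Rule Γ B → Deriv ef Rule Γ (A.or B)
  | orE {Γ : Set PF} {A B C : PF} : Deriv ef Rule Γ (A.or B) → Deriv ef Rule (insert A Γ) C →
      Deriv ef Rule (insert B Γ) C → Deriv ef Rule Γ C
  | impI {Γ : Set PF} {A B : PF} : Deriv ef Rule (insert A Γ) B → Deriv ef Rule Γ (A.imp B)
  | exfalso {Γ : Set PF} {A : PF} : ef → Deriv ef Rule Γ .bot → Deriv ef Rule Γ A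
  | fAndI {Γ : Set PF} {A B C : PF} : Deriv ef Rule Γ (A.imp B) → Deriv ef Rule Γ (A.imp C) →
      Deriv ef Rule Γ (A.imp (B.and C))
  | fOrE {Γ : Set PF} {A B C : PF} : Deriv ef Rule Γ (A.imp C) → Deriv ef Rule Γ (B.imp C) →
      Deriv ef Rule Γ ((A.or B).imp C)
  | fTr {Γ : Set PF} {A B C : PF} : Deriv ef Rule Γ (A.imp B) → Deriv ef Rule Γ (B.imp C) →
      Deriv ef Rule Γ (A.imp C)
  | extra {Γ : Set PF} {ps : List PF} {c : PF} : Rule ps c → (∀ p ∈ ps, Deriv ef Rule Γ p) → Deriv ef Rule Γ c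

/-- No extra rule. -/
def RuleNone : List PF → PF → Prop := fun _ _ => False
/-- Rule C : from A and ¬A infer ⊥. -/
def RuleC : List PF → PF → Prop := fun ps c => ∃ A : PF, ps = [A, A.neg] ∧ c = .bot
/-- Rule R (modus ponens) : from A and A→B infer B. -/
def RuleR : List PF → PF → Prop := fun ps c => ∃ A B : PF, ps = [A, A.imp B] ∧ c = B
/-- Löb's rule L : from (A∧(A→B))→B infer A→B. -/
def RuleL : List PF → PF → Prop :=
  fun ps c => ∃ A B : PF, ps = [(A.and (A.imp B)).imp B] ∧ c = A.imp B
/-- Rule C' : from ⊤→⊥ infer ⊥. -/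
def RuleC' : List PF → PF → Prop := fun ps c => ps = [PF.top.imp .bot] ∧ c = .bot
/-- Rule R' : from ⊤→A infer A. -/
def RuleR' : List PF → PF → Prop := fun ps c => ∃ A : PF, ps = [PF.top.imp A] ∧ c = A
/-- Rule L' : from (⊤→A)→A infer ⊤→A. -/
def RuleL' : List PF → PF → Prop :=
  fun ps c => ∃ A : PF, ps = [(PF.top.imp A).imp A] ∧ c = PF.top.imp A

def BPC  : Set PF → PF → Prop := Deriv True RuleNone
def EBPC : Set PF → PF → Prop := Deriv True RuleC
def IPC  : Set PF → PF → Prop := Deriv True RuleR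
def FPL  : Set PF → PF → Prop := Deriv True RuleL
def MPC  : Set PF → PF → Prop := Deriv False RuleR

/-! ### BHK translations -/

/-- The BHK translation `b`. -/
def bhk : PF → MF
  | .atom n => .box (.atom n)
  | .bot => .box .bot
  | .and A B => (bhk A).and (bhk B)
  | .or A B => (bhk A).or (bhk B)
  | .imp A B => .box ((bhk A).imp (bhk B))

/-- The weak BHK translation `w`.  The propositional atom `n` is embedded as
the modal atom `n+1`, and the fresh atom `q` (not in the propositional
language) is the modal atom `0`; `⊥^w = □q`. -/
def wtr : PF → MF
  | .atom n => .box (.atom (n+1))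
  | .bot => .box (.atom 0)
  | .and A B => (wtr A).and (wtr B)
  | .or A B => (wtr A).or (wtr B)
  | .imp A B => .box ((wtr A).imp (wtr B))

/-! ### The cut-free sequent calculus G(KD4) -/

/-- Cut-free derivability in the sequent calculus G(KD4): axioms,
structural rules (weakening, contraction, exchange), two-sided rules for
∧, ∨, →, ¬, and the modal rules □₄R and □_D R. -/
inductive GKD4 : List MF → List MF → Prop
  | ax (A) : GKD4 [A] [A]
  | axBot : GKD4 [.bot] []
  | exL {Γ Γ' Δ : List MF} : GKD4 Γ Δ → Γ.Perm Γ' → GKD4 Γ' Δ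
  | exR {Γ Δ Δ' : List MF} : GKD4 Γ Δ → Δ.Perm Δ' → GKD4 Γ Δ'
  | wL {Γ Δ : List MF} (A : MF) : GKD4 Γ Δ → GKD4 (A :: Γ) Δ
  | wR {Γ Δ : List MF} (A : MF) : GKD4 Γ Δ → GKD4 Γ (A :: Δ)
  | cL {Γ Δ : List MF} {A : MF} : GKD4 (A :: A :: Γ) Δ → GKD4 (A :: Γ) Δ
  | cR {Γ Δ : List MF} {A : MF} : GKD4 Γ (A :: A :: Δ) → GKD4 Γ (A :: Δ)
  | andL1 {Γ Δ : List MF} {A B : MF} : GKD4 (A :: Γ) Δ → GKD4 (A.and B :: Γ) Δ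
  | andL2 {Γ Δ : List MF} {A B : MF} : GKD4 (B :: Γ) Δ → GKD4 (A.and B :: Γ) Δ
  | andR {Γ₀ Δ₀ Γ₁ Δ₁ : List MF} {A B : MF} : GKD4 Γ₀ (A :: Δ₀) → GKD4 Γ₁ (B :: Δ₁) →
      GKD4 (Γ₀ ++ Γ₁) (A.and B :: (Δ₀ ++ Δ₁))
  | orL {Γ₀ Δ₀ Γ₁ Δ₁ : List MF} {A B : MF} : GKD4 (A :: Γ₀) Δ₀ → GKD4 (B :: Γ₁) Δ₁ →
      GKD4 (A.or B :: (Γ₀ ++ Γ₁)) (Δ₀ ++ Δ₁)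
  | orR1 {Γ Δ : List MF} {A B : MF} : GKD4 Γ (A :: Δ) → GKD4 Γ (A.or B :: Δ)
  | orR2 {Γ Δ : List MF} {A B : MF} : GKD4 Γ (B :: Δ) → GKD4 Γ (A.or B :: Δ)
  | impL {Γ₀ Δ₀ Γ₁ Δ₁ : List MF} {A B : MF} : GKD4 Γ₀ (A :: Δ₀) → GKD4 (B :: Γ₁) Δ₁ →
      GKD4 (A.imp B :: (Γ₀ ++ Γ₁)) (Δ₀ ++ Δ₁)
  | impR {Γ Δ : List MF} {A B : MF} : GKD4 (A :: Γ) (B :: Δ) → GKD4 Γ (A.imp B :: Δ)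
  | negL {Γ Δ : List MF} {A : MF} : GKD4 Γ (A :: Δ) → GKD4 (A.neg :: Γ) Δ
  | negR {Γ Δ : List MF} {A : MF} : GKD4 (A :: Γ) Δ → GKD4 Γ (A.neg :: Δ)
  | box4R {Γ : List MF} {A : MF} : GKD4 (Γ ++ Γ.map MF.box) [A] → GKD4 (Γ.map MF.box) [MF.box A]
  | boxDR {Γ : List MF} : GKD4 (Γ ++ Γ.map MF.box) [] → GKD4 (Γ.map MF.box) []

/-- Disjunction of a finite list of propositional formulas (empty: ⊥). -/
def disjL : List PF → PF
  | [] => .bot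
  | [A] => A
  | A :: B :: r => A.or (disjL (B :: r))

/-! ### Kripke semantics for MPC -/

/-- Intuitionistic (minimal) forcing, where `⊥` has its own upward-closed
valuation `Vbot`. -/
def MForces {W : Type} (le : W → W → Prop) (V : ℕ → W → Prop) (Vbot : W → Prop) :
    W → PF → Prop
  | w, .atom n => V n w
  | w, .bot => Vbot w
  | w, .and A B => MForces le V Vbot w A ∧ MForces le V Vbot w B
  | w, .or A B => MForces le V Vbot w A ∨ MForces le V Vbot w B
  | w, .imp A B => ∀ u, le w u → MForces le V Vbot u A → MForces le V Vbot u B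

/-- The S4 valuation induced by an MPC valuation: the fresh atom `q` (modal
atom 0) gets `V(⊥)`, and the propositional atom `n` (modal atom `n+1`) gets `V(n)`. -/
def shiftVal {W : Type} (V : ℕ → W → Prop) (Vbot : W → Prop) : ℕ → W → Prop
  | 0 => Vbot
  | n+1 => V n

/-! ### Proof -/

theorem prv_of1 {Ax : MF → Prop} {A B : MF} (hA : Prv Ax A)
    (h : ∀ v, MF.Respects v → v A = true → v B = true) : Prv Ax B := by
  refine Prv.mp (A := A) (Prv.taut ?_) hA
  intro v hv
  have := h v hv
  obtain ⟨h1, h2, h3, h4, h5⟩ := hv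
  rw [h4]
  cases hA : v A <;> simp_all

theorem prv_of2 {Ax : MF → Prop} {A B C : MF} (hA : Prv Ax A) (hB : Prv Ax B)
    (h : ∀ v, MF.Respects v → v A = true → v B = true → v C = true) : Prv Ax C := by
  refine Prv.mp (A := B) (prv_of1 hA ?_) hB
  intro v hv hA
  have := h v hv hA
  obtain ⟨h1, h2, h3, h4, h5⟩ := hv
  rw [h4]
  cases hA : v B <;> simp_all

theorem prv_of3 {Ax : MF → Prop} {A B C D : MF} (hA : Prv Ax A) (hB : Prv Ax B) (hC : Prv Ax C)
    (h : ∀ v, MF.Respects v → v A = true → v B = true → v C = true → v D = true) : Prv Ax D := by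
  refine Prv.mp (A := C) (prv_of2 hA hB ?_) hC
  intro v hv hA hB
  have := h v hv hA hB
  obtain ⟨h1, h2, h3, h4, h5⟩ := hv
  rw [h4]
  cases hA : v C <;> simp_all

def mtop : MF := MF.imp MF.bot MF.bot

/-- conjunction of the boxes of `f 0, …, f (k-1)` -/
def bx (f : ℕ → MF) : ℕ → MF
  | 0 => mtop
  | k+1 => (bx f k).and (MF.box (f k))

open Classical in
/-- The interpretation at level `k`. -/
noncomputable def lev (q : ℕ → ℕ) : MF → ℕ → MF
  | .atom a, k => if ∃ i, a = q i then (if ∃ i, a = q i ∧ i ≤ k then mtop else .bot) else .atom a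
  | .bot, _ => .bot
  | .and A B, k => (lev q A k).and (lev q B k)
  | .or A B, k => (lev q A k).or (lev q B k)
  | .imp A B, k => (lev q A k).imp (lev q B k)
  | .neg A, k => (lev q A k).neg
  | .box A, k => bx (lev q A) k

theorem box_mono {Ax : MF → Prop} {A B : MF} (h : Prv Ax (A.imp B)) :
    Prv Ax ((MF.box A).imp (MF.box B)) := Prv.mp Prv.axK (Prv.nec h)

theorem bx_axK {Ax : MF → Prop} (f g : ℕ → MF) (k : ℕ) :
    Prv Ax ((bx (fun i => (f i).imp (g i)) k).imp ((bx f k).imp (bx g k))) := by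
  induction k with
  | zero =>
    apply Prv.taut
    rintro v ⟨h1, h2, h3, h4, h5⟩
    simp [bx, mtop, h4, h1]
  | succ k ih =>
    refine prv_of2 ih (Prv.axK (A := f k) (B := g k)) ?_
    rintro v ⟨h1, h2, h3, h4, h5⟩
    simp only [bx, h4, h2]
    grind

/-- `⋀ □ f i → □ ⋀ □ f i` in K4. -/
theorem bx_four (f : ℕ → MF) (k : ℕ) :
    PrvK4 ((bx f k).imp (MF.box (bx f k))) := by
  induction k with
  | zero =>
    have : PrvK4 (MF.box mtop) := Prv.nec (Prv.taut (by
      rintro v ⟨h1, h2, h3, h4, h5⟩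
      simp [mtop, h4, h1]))
    refine prv_of1 this ?_
    rintro v ⟨h1, h2, h3, h4, h5⟩
    simp only [bx, h4]
    grind
  | succ k ih =>
    have e4 : PrvK4 ((MF.box (f k)).imp (MF.box (MF.box (f k)))) := Prv.extra ⟨_, rfl⟩
    have e1 : PrvK4 ((bx f k).imp ((MF.box (f k)).imp (bx f (k+1)))) := Prv.taut (by
      rintro v ⟨h1, h2, h3, h4, h5⟩
      simp only [bx, h4, h2]
      grind)
    have e2 := box_mono e1
    have e3 : PrvK4 (MF.box ((MF.box (f k)).imp (bx f (k+1))) |>.imp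
      ((MF.box (MF.box (f k))).imp (MF.box (bx f (k+1))))) := Prv.axK
    have e5 := prv_of3 ih e4 e2 (D := (bx f (k+1)).imp (MF.box ((MF.box (f k)).imp (bx f (k+1)))|>.and (MF.box (MF.box (f k))))) (by
      rintro v ⟨h1, h2, h3, h4, h5⟩
      simp only [bx, h4, h2]
      grind)
    refine prv_of2 e3 e5 ?_
    rintro v ⟨h1, h2, h3, h4, h5⟩
    simp only [h4, h2]
    grind

theorem bx_loeb (f : ℕ → MF) (k : ℕ) :
    PrvK4 ((bx (fun i => (bx f i).imp (f i)) k).imp (bx f k)) := by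
  induction k with
  | zero =>
    apply Prv.taut
    rintro v ⟨h1, h2, h3, h4, h5⟩
    simp [bx, mtop, h4, h1]
  | succ k ih =>
    refine prv_of3 ih (Prv.axK (A := bx f k) (B := f k)) (bx_four f k) ?_
    rintro v ⟨h1, h2, h3, h4, h5⟩
    simp only [bx, h4, h2]
    grind

theorem bx_nec {Ax : MF → Prop} (f : ℕ → MF) (k : ℕ) (h : ∀ i, Prv Ax (f i)) :
    Prv Ax (bx f k) := by
  induction k with
  | zero =>
    apply Prv.taut
    rintro v ⟨h1, h2, h3, h4, h5⟩
    simp [bx, mtop, h4, h1]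
  | succ k ih =>
    refine prv_of2 ih (Prv.nec (h k)) ?_
    rintro v ⟨h1, h2, h3, h4, h5⟩
    simp only [bx, h2]
    grind

theorem lev_sound (q : ℕ → ℕ) {C : MF} (h : PrvGL C) : ∀ k, PrvK4 (lev q C k) := by
  unfold PrvGL at h
  induction h with
  | taut hC =>
    intro k
    apply Prv.taut
    rintro v ⟨h1, h2, h3, h4, h5⟩
    exact hC (fun D => v (lev q D k)) ⟨by simp [lev, h1], by simp [lev, h2], by simp [lev, h3],
      by simp [lev, h4], by simp [lev, h5]⟩
  | axK => intro k; exact bx_axK _ _ k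
  | extra hC => obtain ⟨B, rfl⟩ := hC; intro k; exact bx_loeb _ k
  | mp _ _ ih1 ih2 => intro k; exact Prv.mp (ih1 k) (ih2 k)
  | nec _ ih => intro k; exact bx_nec _ k ih

theorem conjQ_false (q : ℕ → ℕ) (hinj : Function.Injective q) (n k : ℕ) (h : k < n)
    (v : MF → Bool) (hv : MF.Respects v) : v (lev q (conjQ q n) k) = false := by
  obtain ⟨h1, h2, h3, h4, h5⟩ := hv
  cases n with
  | zero => omega
  | succ n =>
    have h6 : ¬ ∃ i, q (n+1) = q i ∧ i ≤ k := by
      rintro ⟨i, hi, hk⟩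
      have := hinj hi
      omega
    have h7 : ∃ i, q (n+1) = q i := ⟨_, rfl⟩
    simp only [conjQ, lev, h2]
    rw [if_pos h7, if_neg h6, h1, Bool.and_false]

theorem conjQ_true (q : ℕ → ℕ) (n k : ℕ) (h : n ≤ k)
    (v : MF → Bool) (hv : MF.Respects v) : v (lev q (conjQ q n) k) = true := by
  obtain ⟨h1, h2, h3, h4, h5⟩ := hv
  have ha : ∀ m, m ≤ k → v (lev q (.atom (q m)) k) = true := by
    intro m hm
    have h6 : ∃ i, q m = q i ∧ i ≤ k := ⟨m, rfl, hm⟩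
    have h7 : ∃ i, q m = q i := ⟨_, rfl⟩
    simp only [lev]
    rw [if_pos h7, if_pos h6, mtop, h4, h1]
    rfl
  induction n with
  | zero => exact ha 0 h
  | succ n ih =>
    have e1 := ih (by omega)
    have e2 := ha (n+1) h
    show v ((lev q (conjQ q n) k).and (lev q (.atom (q (n+1))) k)) = true
    rw [h2, e1, e2]; rfl

def miff (A B : MF) : MF := (A.imp B).and (B.imp A)

theorem bx_elim {Ax : MF → Prop} (f : ℕ → MF) (n k : ℕ) (h : n < k) :
    Prv Ax ((bx f k).imp (MF.box (f n))) := by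
  apply Prv.taut
  rintro v ⟨h1, h2, h3, h4, h5⟩
  induction k with
  | zero => omega
  | succ k ih =>
    rcases Nat.lt_succ_iff_lt_or_eq.mp h with h | rfl
    · have := ih h
      simp only [bx, h4, h2] at this ⊢
      grind
    · simp only [bx, h4, h2]
      grind

theorem bx_intro {Ax : MF → Prop} (f : ℕ → MF) (B : MF) (k : ℕ)
    (h : ∀ i < k, Prv Ax (B.imp (f i))) : Prv Ax ((MF.box B).imp (bx f k)) := by
  induction k with
  | zero =>
    apply Prv.taut
    rintro v ⟨h1, h2, h3, h4, h5⟩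
    simp [bx, mtop, h4, h1]
  | succ k ih =>
    refine prv_of2 (ih fun i hi => h i (by omega)) (box_mono (h k (by omega))) ?_
    rintro v ⟨h1, h2, h3, h4, h5⟩
    simp only [bx, h4, h2]
    grind

theorem lev_trans (q : ℕ → ℕ) (hinj : Function.Injective q) (t : AMF) :
    (∀ i, q i ∉ t.erase.atoms) → t.Ordered → ∀ k, (∀ m ∈ t.labels, m < k) →
    PrvK4 (miff (lev q (t.trans q) k) t.erase) := by
  induction t with
  | atom a =>
    intro hf _ k _
    have h7 : ¬ ∃ i, a = q i := by
      rintro ⟨i, hi⟩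
      exact hf i (by simp [AMF.erase, MF.atoms, hi])
    apply Prv.taut
    rintro v ⟨h1, h2, h3, h4, h5⟩
    simp only [AMF.trans, lev, AMF.erase, miff]
    rw [if_neg h7, h2, h4]
    grind
  | bot =>
    intro hf _ k _
    apply Prv.taut
    rintro v ⟨h1, h2, h3, h4, h5⟩
    simp [AMF.trans, lev, AMF.erase, miff, h2, h4, h1]
  | and A B ihA ihB =>
    intro hf ho k hk
    simp only [AMF.erase, MF.atoms, Set.mem_union, not_or, AMF.labels, List.mem_append] at hf hk
    refine prv_of2 (ihA (fun i => (hf i).1) ho.1 k fun m hm => hk m (.inl hm))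
      (ihB (fun i => (hf i).2) ho.2 k fun m hm => hk m (.inr hm)) ?_
    rintro v ⟨h1, h2, h3, h4, h5⟩
    simp only [AMF.trans, lev, AMF.erase, miff, h2, h4]
    grind
  | or A B ihA ihB =>
    intro hf ho k hk
    simp only [AMF.erase, MF.atoms, Set.mem_union, not_or, AMF.labels, List.mem_append] at hf hk
    refine prv_of2 (ihA (fun i => (hf i).1) ho.1 k fun m hm => hk m (.inl hm))
      (ihB (fun i => (hf i).2) ho.2 k fun m hm => hk m (.inr hm)) ?_
    rintro v ⟨h1, h2, h3, h4, h5⟩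
    simp only [AMF.trans, lev, AMF.erase, miff, h2, h3, h4]
    grind
  | imp A B ihA ihB =>
    intro hf ho k hk
    simp only [AMF.erase, MF.atoms, Set.mem_union, not_or, AMF.labels, List.mem_append] at hf hk
    refine prv_of2 (ihA (fun i => (hf i).1) ho.1 k fun m hm => hk m (.inl hm))
      (ihB (fun i => (hf i).2) ho.2 k fun m hm => hk m (.inr hm)) ?_
    rintro v ⟨h1, h2, h3, h4, h5⟩
    simp only [AMF.trans, lev, AMF.erase, miff, h2, h4]
    grind
  | neg A ihA =>
    intro hf ho k hk
    refine prv_of1 (ihA hf ho k hk) ?_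
    rintro v ⟨h1, h2, h3, h4, h5⟩
    simp only [AMF.trans, lev, AMF.erase, miff, h2, h4, h5]
    grind
  | box n A ihA =>
    intro hf ho k hk
    have hn : n < k := hk n (by simp [AMF.labels])
    have key : ∀ i, n ≤ i → PrvK4 (miff (lev q (A.trans q) i) A.erase) := fun i hi =>
      ihA hf ho.1 i fun m hm => lt_of_lt_of_le (ho.2 m hm) hi
    set f : ℕ → MF := lev q ((conjQ q n).imp (A.trans q)) with hfdef
    have hfi : ∀ i, f i = (lev q (conjQ q n) i).imp (lev q (A.trans q) i) := fun i => rfl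
    have d1 : PrvK4 ((bx f k).imp (MF.box A.erase)) := by
      refine prv_of2 (bx_elim f n k hn) (box_mono (A := f n) (B := A.erase) ?_)
        (B := (MF.box (f n)).imp (MF.box A.erase)) ?_
      · refine prv_of1 (key n le_rfl) ?_
        intro v hv
        have hc := conjQ_true q n n le_rfl v hv
        obtain ⟨h1, h2, h3, h4, h5⟩ := hv
        simp only [hfi, miff, h2, h4, hc]
        grind
      · rintro v ⟨h1, h2, h3, h4, h5⟩
        simp only [h4]
        grind
    have d2 : PrvK4 ((MF.box A.erase).imp (bx f k)) := by
      apply bx_intro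
      intro i _
      by_cases hi : n ≤ i
      · refine prv_of1 (key i hi) ?_
        rintro v ⟨h1, h2, h3, h4, h5⟩
        simp only [hfi, miff, h2, h4]
        grind
      · apply Prv.taut
        intro v hv
        have hc := conjQ_false q hinj n i (by omega) v hv
        obtain ⟨h1, h2, h3, h4, h5⟩ := hv
        simp [hfi, h4, hc]
    refine prv_of2 d1 d2 (C := miff (bx f k) (MF.box A.erase)) ?_
    rintro v ⟨h1, h2, h3, h4, h5⟩
    simp only [miff, h2]
    grind

-- STATEMENT 0
theorem stmt0 (A : MF) (t : AMF) (q : ℕ → ℕ)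
    (hinj : Function.Injective q)
    (hfresh : ∀ i, q i ∉ A.atoms)
    (herase : t.erase = A)
    (hord : t.Ordered)
    (hGL : PrvGL (t.trans q)) :
    PrvK4 A := by
  subst herase
  obtain ⟨k, hk⟩ : ∃ k, ∀ m ∈ t.labels, m < k :=
    ⟨t.labels.sum + 1, fun m hm => Nat.lt_succ_of_le (List.le_sum_of_mem hm)⟩
  refine prv_of2 (lev_trans q hinj t hfresh hord k hk) (lev_sound q hGL k) ?_
  rintro v ⟨h1, h2, h3, h4, h5⟩
  simp only [miff, h2, h4]
  grind
end

section
/- Let (K, R, V) be a finite transitive Kripke tree with clusters, A a modal formula, and t a translation for A. Then there is a finite transitive irreflexive Kripke model (K', R', V') such that for every node k ∈ K with k ⊨ A there is a node k' ∈ K' with k' ⊨ A^t. -/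
theorem aux_conjQ {W : Type} (R : W → W → Prop) (V : ℕ → W → Prop) (q : ℕ → ℕ) (w : W) (i : ℕ)
    (h : ∀ m, V (q m) w ↔ m ≤ i) : ∀ n, Forces R V w (conjQ q n) ↔ n ≤ i
  | 0 => by simpa [conjQ, Forces] using h 0
  | n+1 => by
    simp only [conjQ, Forces, aux_conjQ R V q w i h n, h]
    omega

def auxR {W : Type} (R : W → W → Prop) (N : ℕ) (x y : W × Fin (N+1)) : Prop :=
  R x.1 y.1 ∧ (R y.1 x.1 → y.2 < x.2)

def auxV {W : Type} (V : ℕ → W → Prop) (q : ℕ → ℕ) (N : ℕ) (p : ℕ) (x : W × Fin (N+1)) : Prop :=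
  (∃ m, q m = p ∧ m ≤ x.2.val) ∨ ((∀ m, q m ≠ p) ∧ V p x.1)

theorem aux_main {W : Type} (R : W → W → Prop) (V : ℕ → W → Prop) (q : ℕ → ℕ) (N : ℕ)
    (hinj : Function.Injective q) (t : AMF) :
    (∀ i, q i ∉ t.erase.atoms) → t.Ordered →
    ∀ (k : W) (i : Fin (N+1)), (∀ m ∈ t.labels, m < i.val) →
      (Forces (auxR R N) (auxV V q N) (k, i) (t.trans q) ↔ Forces R V k t.erase) := by
  induction t with
  | atom n =>
    intro hf _ k i _
    have hf' : ∀ m, q m ≠ n := fun m => by simpa [AMF.erase, MF.atoms] using hf m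
    simp only [AMF.trans, AMF.erase, Forces, auxV]
    constructor
    · rintro (⟨m, hm, _⟩ | h)
      · exact absurd hm (hf' m)
      · exact h.2
    · exact fun h => Or.inr ⟨hf', h⟩
  | bot => intros; simp [AMF.trans, AMF.erase, Forces]
  | neg A ih =>
    intro hf ho k i hl
    simp only [AMF.trans, AMF.erase, Forces]
    rw [ih hf ho k i hl]
  | and A B ihA ihB | or A B ihA ihB | imp A B ihA ihB =>
    intro hf ho k i hl
    simp only [AMF.erase, MF.atoms, Set.mem_union, not_or] at hf
    simp only [AMF.labels, List.mem_append] at hl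
    simp only [AMF.trans, AMF.erase, Forces]
    rw [ihA (fun i => (hf i).1) ho.1 k i (fun m hm => hl m (Or.inl hm)),
      ihB (fun i => (hf i).2) ho.2 k i (fun m hm => hl m (Or.inr hm))]
  | box n A ih =>
    intro hf ho k i hl
    have hn : n < i.val := hl n (by simp [AMF.labels])
    have hq : ∀ x : W × Fin (N+1), Forces (auxR R N) (auxV V q N) x (conjQ q n) ↔ n ≤ x.2.val := by
      intro x
      apply aux_conjQ
      intro m
      constructor
      · rintro (⟨m', h, h'⟩ | h)
        · rwa [← hinj h]
        · exact absurd rfl (h.1 m)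
      · exact fun h => Or.inl ⟨m, rfl, h⟩
    simp only [AMF.trans, AMF.erase, Forces]
    constructor
    · intro h l hkl
      have hnN : n < N + 1 := hn.trans i.isLt
      exact (ih hf ho.1 l ⟨n, hnN⟩ ho.2).1
        (h (l, ⟨n, hnN⟩) ⟨hkl, fun _ => hn⟩ ((hq _).2 le_rfl))
    · rintro h ⟨l, j⟩ hkl hc
      have hj : n ≤ j.val := (hq _).1 hc
      exact (ih hf ho.1 l j (fun m hm => (ho.2 m hm).trans_le hj)).2 (h l hkl.1)

-- STATEMENT 1
theorem stmt1 {W : Type} [Fintype W] (R : W → W → Prop) (V : ℕ → W → Prop)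
    (hR : TreeWithClusters R)
    (A : MF) (t : AMF) (q : ℕ → ℕ)
    (hinj : Function.Injective q)
    (hfresh : ∀ i, q i ∉ A.atoms)
    (herase : t.erase = A)
    (hord : t.Ordered) :
    ∃ (W' : Type) (_ : Fintype W') (R' : W' → W' → Prop) (V' : ℕ → W' → Prop),
      Transitive R' ∧ Irreflexive R' ∧
      ∀ k : W, Forces R V k A → ∃ k' : W', Forces R' V' k' (t.trans q) := by
  subst herase
  obtain ⟨N, hN⟩ : ∃ N, ∀ m ∈ t.labels, m < N :=
    ⟨t.labels.sum + 1, fun m hm => Nat.lt_succ_of_le (List.le_sum_of_mem hm)⟩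
  refine ⟨W × Fin (N+1), inferInstance, auxR R N, auxV V q N, ?_, ?_, ?_⟩
  · rintro x y z ⟨h1, h2⟩ ⟨h3, h4⟩
    refine ⟨hR.trans h1 h3, fun h => ?_⟩
    exact (h4 (hR.trans h h1)).trans (h2 (hR.trans h3 h))
  · rintro x ⟨h1, h2⟩
    exact lt_irrefl _ (h2 h1)
  · intro k hk
    exact ⟨(k, Fin.last N), (aux_main R V q N hinj t hfresh hord k (Fin.last N) hN).2 hk⟩
end

section
/- For every set Γ of propositional formulas and every propositional formula A: Γ ⊢_BPC A if and only if Γ^b ⊢_K4 A^b. -/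
section Helpers

/-- Truth under a boolean valuation. -/
def Tr (v : MF → Bool) (A : MF) : Prop := v A = true

theorem Tr.bot {v} (h : MF.Respects v) : Tr v .bot ↔ False := by simp [Tr, h.1]
theorem Tr.and {v} (h : MF.Respects v) (A B) : Tr v (.and A B) ↔ Tr v A ∧ Tr v B := by
  simp [Tr, h.2.1]
theorem Tr.or {v} (h : MF.Respects v) (A B) : Tr v (.or A B) ↔ Tr v A ∨ Tr v B := by
  simp [Tr, h.2.2.1]
theorem Tr.imp {v} (h : MF.Respects v) (A B) : Tr v (.imp A B) ↔ (Tr v A → Tr v B) := by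
  simp only [Tr, h.2.2.2.1]; cases v A <;> simp
theorem Tr.conj {v} (h : MF.Respects v) (l : List MF) : Tr v (conjL l) ↔ ∀ B ∈ l, Tr v B := by
  induction l with
  | nil => simp [conjL, Tr.imp h]
  | cons a l ih =>
    have : conjL (a :: l) = .and a (conjL l) := rfl
    rw [this, Tr.and h, ih]; simp

theorem pTaut {Ax A} (h : ∀ v, MF.Respects v → Tr v A) : Prv Ax A := .taut h
theorem pTc1 {Ax A B} (a : Prv Ax A) (h : ∀ v, MF.Respects v → Tr v A → Tr v B) : Prv Ax B :=
  .mp (pTaut fun v hv => (Tr.imp hv _ _).2 (h v hv)) a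
theorem pTc2 {Ax A B C} (a : Prv Ax A) (b : Prv Ax B)
    (h : ∀ v, MF.Respects v → Tr v A → Tr v B → Tr v C) : Prv Ax C :=
  .mp (pTc1 a fun v hv ha => (Tr.imp hv _ _).2 (h v hv ha)) b
theorem pTrans {Ax A B C} (a : Prv Ax (.imp A B)) (b : Prv Ax (.imp B C)) : Prv Ax (.imp A C) :=
  pTc2 a b fun v hv => by simp only [Tr.imp hv]; tauto
theorem pBox1 {Ax A B} (a : Prv Ax (.imp A B)) : Prv Ax (.imp (.box A) (.box B)) :=
  .mp .axK (.nec a)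
theorem pBox2 {Ax A B C} (a : Prv Ax (.imp A (.imp B C))) :
    Prv Ax (.imp (.box A) (.imp (.box B) (.box C))) :=
  pTrans (pBox1 a) .axK

theorem pBoxAnd {Ax A B} : Prv Ax (.imp (.and (.box A) (.box B)) (.box (.and A B))) := by
  have : Prv Ax (.imp A (.imp B (.and A B))) :=
    pTaut fun v hv => by simp only [Tr.imp hv, Tr.and hv]; tauto
  exact pTc1 (pBox2 this) fun v hv => by simp only [Tr.imp hv, Tr.and hv]; tauto

theorem pPersist (A : PF) : Prv AxK4 (.imp (bhk A) (.box (bhk A))) := by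
  induction A with
  | atom n => exact .extra ⟨_, rfl⟩
  | bot => exact .extra ⟨_, rfl⟩
  | imp A B => exact .extra ⟨_, rfl⟩
  | and A B iha ihb =>
    refine pTrans (pTc2 iha ihb ?_) pBoxAnd
    intro v hv; simp only [bhk, Tr.imp hv, Tr.and hv]; tauto
  | or A B iha ihb =>
    have h1 : Prv AxK4 (.imp (.box (bhk A)) (.box (.or (bhk A) (bhk B)))) :=
      pBox1 (pTaut fun v hv => by simp only [Tr.imp hv, Tr.or hv]; tauto)
    have h2 : Prv AxK4 (.imp (.box (bhk B)) (.box (.or (bhk A) (bhk B)))) :=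
      pBox1 (pTaut fun v hv => by simp only [Tr.imp hv, Tr.or hv]; tauto)
    refine pTc2 (pTrans iha h1) (pTrans ihb h2) ?_
    intro v hv; simp only [bhk, Tr.imp hv, Tr.or hv]; tauto

theorem pExf {Ax} (A : PF) : Prv Ax (.imp (.box .bot) (bhk A)) := by
  have hb : ∀ X, Prv Ax (.imp (.box .bot) (.box X)) := fun X =>
    pBox1 (pTaut fun v hv => by simp only [Tr.imp hv, Tr.bot hv]; tauto)
  induction A with
  | atom n => exact hb _
  | bot => exact hb _
  | imp A B => exact hb _
  | and A B iha ihb =>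
    exact pTc2 iha ihb fun v hv => by simp only [bhk, Tr.imp hv, Tr.and hv]; tauto
  | or A B iha ihb =>
    exact pTc2 iha ihb fun v hv => by simp only [bhk, Tr.imp hv, Tr.or hv]; tauto

theorem pPersistL (l : List MF) (h : ∀ B ∈ l, ∃ A, bhk A = B) :
    Prv AxK4 (.imp (conjL l) (.box (conjL l))) := by
  induction l with
  | nil =>
    have : Prv AxK4 (MF.box (conjL [])) := .nec (pTaut fun v hv => by simp [Tr.conj hv])
    exact pTc1 this fun v hv => by simp only [Tr.imp hv]; tauto
  | cons a l ih =>
    obtain ⟨A, rfl⟩ := h a (by simp)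
    have ih := ih fun B hB => h B (by simp [hB])
    have : conjL (bhk A :: l) = .and (bhk A) (conjL l) := rfl
    rw [this]
    exact pTrans (pTc2 (pPersist A) ih fun v hv => by
      simp only [Tr.imp hv, Tr.and hv]; tauto) pBoxAnd

theorem mDed {Ax Γ A B} (h : ModalConseq Ax (bhk '' insert A Γ) B) :
    ModalConseq Ax (bhk '' Γ) (.imp (bhk A) B) := by
  obtain ⟨l, hl, hp⟩ := h
  refine ⟨l.filter (· ≠ bhk A), ?_, pTc1 hp ?_⟩
  · intro B hB
    simp only [List.mem_filter, decide_eq_true_eq] at hB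
    obtain ⟨C, hC, rfl⟩ := hl B hB.1
    rcases hC with rfl | hC
    · exact absurd rfl hB.2
    · exact ⟨C, hC, rfl⟩
  · intro v hv
    simp only [Tr.imp hv, Tr.conj hv, List.mem_filter, decide_eq_true_eq]
    intro h1 h2 h3
    refine h1 fun C hC => ?_
    by_cases e : C = bhk A
    · exact e ▸ h3
    · exact h2 C ⟨hC, e⟩

theorem mTc2 {Ax Γ A B C} (a : ModalConseq Ax Γ A) (b : ModalConseq Ax Γ B)
    (h : Prv Ax (.imp A (.imp B C))) : ModalConseq Ax Γ C := by
  obtain ⟨l, hl, hp⟩ := a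
  obtain ⟨m, hm, hq⟩ := b
  refine ⟨l ++ m, ?_, .mp (pTc2 hp hq ?_) h⟩
  · intro B hB
    rcases List.mem_append.1 hB with h | h
    · exact hl _ h
    · exact hm _ h
  · intro v hv
    simp only [Tr.imp hv, Tr.conj hv, List.mem_append]
    intro h1 h2 h3 h4
    exact h3 (h1 fun B hB => h4 B (.inl hB)) (h2 fun B hB => h4 B (.inr hB))

theorem mTc1 {Ax Γ A C} (a : ModalConseq Ax Γ A)
    (h : Prv Ax (.imp A C)) : ModalConseq Ax Γ C := by
  obtain ⟨l, hl, hp⟩ := a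
  exact ⟨l, hl, pTrans hp h⟩

theorem bpcSound {Γ : Set PF} {A : PF} (h : BPC Γ A) :
    ModalConseq AxK4 (bhk '' Γ) (bhk A) := by
  unfold BPC at h
  induction h with
  | @hyp Γ A h =>
    exact ⟨[bhk A], by simpa using ⟨A, h, rfl⟩, pTaut fun v hv => by
      simp [Tr.imp hv, Tr.conj hv]⟩
  | andI _ _ ih1 ih2 =>
    exact mTc2 ih1 ih2 (pTaut fun v hv => by simp only [bhk, Tr.imp hv, Tr.and hv]; tauto)
  | andE1 _ ih =>
    exact mTc1 ih (pTaut fun v hv => by simp only [bhk, Tr.imp hv, Tr.and hv]; tauto)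
  | andE2 _ ih =>
    exact mTc1 ih (pTaut fun v hv => by simp only [bhk, Tr.imp hv, Tr.and hv]; tauto)
  | orI1 _ ih =>
    exact mTc1 ih (pTaut fun v hv => by simp only [bhk, Tr.imp hv, Tr.or hv]; tauto)
  | orI2 _ ih =>
    exact mTc1 ih (pTaut fun v hv => by simp only [bhk, Tr.imp hv, Tr.or hv]; tauto)
  | @orE Γ A B C _ _ _ ih1 ih2 ih3 =>
    have h23 : ModalConseq AxK4 (bhk '' Γ) (.imp (.or (bhk A) (bhk B)) (bhk C)) :=
      mTc2 (mDed ih2) (mDed ih3)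
        (pTaut fun v hv => by simp only [Tr.imp hv, Tr.or hv]; tauto)
    exact mTc2 ih1 h23 (pTaut fun v hv => by simp only [bhk, Tr.imp hv, Tr.or hv]; tauto)
  | impI _ ih =>
    obtain ⟨l, hl, hp⟩ := mDed ih
    refine ⟨l, hl, pTrans (pPersistL l ?_) (pBox1 hp)⟩
    intro B hB
    obtain ⟨C, _, h⟩ := hl B hB
    exact ⟨C, h⟩
  | exfalso _ _ ih => exact mTc1 ih (pExf _)
  | fAndI _ _ ih1 ih2 =>
    exact mTc2 ih1 ih2 (pBox2 (pTaut fun v hv => by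
      simp only [bhk, Tr.imp hv, Tr.and hv]; tauto))
  | fOrE _ _ ih1 ih2 =>
    exact mTc2 ih1 ih2 (pBox2 (pTaut fun v hv => by
      simp only [bhk, Tr.imp hv, Tr.or hv]; tauto))
  | fTr _ _ ih1 ih2 =>
    exact mTc2 ih1 ih2 (pBox2 (pTaut fun v hv => by
      simp only [Tr.imp hv]; tauto))
  | extra h => exact h.elim

open Classical in
theorem k4Sound {W : Type} (R : W → W → Prop) (hR : ∀ x y z, R x y → R y z → R x z)
    (V : ℕ → W → Prop) {A : MF} (h : Prv AxK4 A) : ∀ w, Forces R V w A := by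
  induction h with
  | @taut A h =>
    intro w
    have := h (fun X => decide (Forces R V w X)) (by
      refine ⟨?_, ?_, ?_, ?_, ?_⟩
      · exact decide_eq_false (fun h => h)
      · intro A B; rw [Bool.eq_iff_iff, Bool.and_eq_true]; simp only [decide_eq_true_iff]; rfl
      · intro A B; rw [Bool.eq_iff_iff, Bool.or_eq_true]; simp only [decide_eq_true_iff]; rfl
      · intro A B
        by_cases a : Forces R V w A <;> by_cases b : Forces R V w B <;> simp [Forces, a, b]
      · intro A
        by_cases a : Forces R V w A <;> simp [Forces, a])
    simpa using this
  | axK => intro w h1 h2 u hu; exact h1 u hu (h2 u hu)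
  | extra h => obtain ⟨B, rfl⟩ := h; intro w h1 u hu x hx; exact h1 x (hR _ _ _ hu hx)
  | mp _ _ ih1 ih2 => intro w; exact ih1 w (ih2 w)
  | nec _ ih => intro w u _; exact ih u

theorem forcesConj {W : Type} (R : W → W → Prop) (V : ℕ → W → Prop) (w : W) (l : List MF) :
    Forces R V w (conjL l) ↔ ∀ B ∈ l, Forces R V w B := by
  induction l with
  | nil => simp [conjL, Forces]
  | cons a l ih =>
    have : conjL (a :: l) = .and a (conjL l) := rfl
    rw [this]; simp only [Forces, ih]; simp

/-! Completeness of BPC. -/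

theorem dWeak {Γ : Set PF} {A} (h : BPC Γ A) : ∀ {Δ : Set PF}, Γ ⊆ Δ → BPC Δ A := by
  unfold BPC at *
  induction h with
  | hyp h => intro Δ s; exact .hyp (s h)
  | andI _ _ i j => intro Δ s; exact .andI (i s) (j s)
  | andE1 _ i => intro Δ s; exact .andE1 (i s)
  | andE2 _ i => intro Δ s; exact .andE2 (i s)
  | orI1 _ i => intro Δ s; exact .orI1 (i s)
  | orI2 _ i => intro Δ s; exact .orI2 (i s)
  | orE _ _ _ i j k =>
    intro Δ s
    exact .orE (i s) (j (Set.insert_subset_insert s)) (k (Set.insert_subset_insert s))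
  | impI _ i => intro Δ s; exact .impI (i (Set.insert_subset_insert s))
  | exfalso h _ i => intro Δ s; exact .exfalso h (i s)
  | fAndI _ _ i j => intro Δ s; exact .fAndI (i s) (j s)
  | fOrE _ _ i j => intro Δ s; exact .fOrE (i s) (j s)
  | fTr _ _ i j => intro Δ s; exact .fTr (i s) (j s)
  | extra h => exact h.elim

theorem dCut {Γ : Set PF} {A B} (h : BPC Γ A) (k : BPC (insert A Γ) B) : BPC Γ B :=
  Deriv.orE (Deriv.orI1 (B := A) h) k k

/-- A distributive-lattice preorder on formulas extending BPC entailment. -/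
structure LatPre (le : PF → PF → Prop) : Prop where
  base : ∀ C D, BPC {C} D → le C D
  tr : ∀ C D E, le C D → le D E → le C E
  meet : ∀ C D E, le C D → le C E → le C (D.and E)
  join : ∀ C D E, le C E → le D E → le (C.or D) E

/-- Filters. -/
structure Fil (le : PF → PF → Prop) (S : Set PF) : Prop where
  ne : S.Nonempty
  up : ∀ C D, C ∈ S → le C D → D ∈ S
  meet : ∀ C D, C ∈ S → D ∈ S → C.and D ∈ S

theorem dist4 (X Y C D : PF) :
    BPC {(X.and Y).and (C.or D)} ((X.and C).or (Y.and D)) := by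
  have h : BPC {(X.and Y).and (C.or D)} ((X.and Y).and (C.or D)) := .hyp rfl
  have h1 := Deriv.andE1 h
  have hX := Deriv.andE1 h1
  have hY := Deriv.andE2 h1
  refine Deriv.orE (Deriv.andE2 h) (.orI1 (.andI (dWeak hX ?_) (.hyp ?_)))
    (.orI2 (.andI (dWeak hY ?_) (.hyp ?_))) <;> simp

theorem filGen {le} (L : LatPre le) {S} (hS : Fil le S) (C : PF) :
    Fil le {E | ∃ X ∈ S, le (X.and C) E} := by
  refine ⟨?_, ?_, ?_⟩
  · obtain ⟨X, hX⟩ := hS.ne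
    exact ⟨_, X, hX, L.base _ _ (.hyp rfl)⟩
  · rintro D E ⟨X, hX, h⟩ h2
    exact ⟨X, hX, L.tr _ _ _ h h2⟩
  · rintro D E ⟨X, hX, h⟩ ⟨Y, hY, h'⟩
    refine ⟨X.and Y, hS.meet _ _ hX hY, L.meet _ _ _ (L.tr _ _ _ (L.base _ _ ?_) h)
      (L.tr _ _ _ (L.base _ _ ?_) h')⟩
    · have h : BPC {(X.and Y).and C} ((X.and Y).and C) := .hyp rfl
      exact .andI (.andE1 (.andE1 h)) (.andE2 h)
    · have h : BPC {(X.and Y).and C} ((X.and Y).and C) := .hyp rfl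
      exact .andI (.andE2 (.andE1 h)) (.andE2 h)

theorem primeExt {le} (L : LatPre le) {A B} (h : ¬ le A B) :
    ∃ S, Fil le S ∧ A ∈ S ∧ B ∉ S ∧ ∀ C D, C.or D ∈ S → C ∈ S ∨ D ∈ S := by
  have h0 : Fil le {E | le A E} :=
    ⟨⟨A, L.base _ _ (.hyp rfl)⟩, fun C D => L.tr _ _ _, fun C D => L.meet _ _ _⟩
  obtain ⟨S, hsub, hmax⟩ := zorn_subset_nonempty {S | Fil le S ∧ B ∉ S} (by
    intro c hc hch hne
    refine ⟨⋃₀ c, ⟨⟨?_, ?_, ?_⟩, ?_⟩, fun s hs => Set.subset_sUnion_of_mem hs⟩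
    · obtain ⟨s, hs⟩ := hne
      obtain ⟨x, hx⟩ := (hc hs).1.ne
      exact ⟨x, s, hs, hx⟩
    · rintro C D ⟨s, hs, hC⟩ hle
      exact ⟨s, hs, (hc hs).1.up _ _ hC hle⟩
    · rintro C D ⟨s, hs, hC⟩ ⟨t, ht, hD⟩
      rcases hch.total hs ht with hst | hst
      · exact ⟨t, ht, (hc ht).1.meet _ _ (hst hC) hD⟩
      · exact ⟨s, hs, (hc hs).1.meet _ _ hC (hst hD)⟩
    · rintro ⟨s, hs, hB⟩
      exact (hc hs).2 hB) {E | le A E} ⟨h0, h⟩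
  obtain ⟨hF, hB⟩ := hmax.prop
  refine ⟨S, hF, hsub (L.base _ _ (.hyp rfl)), hB, ?_⟩
  intro C D hCD
  by_contra hcon
  push Not at hcon
  have key : ∀ C, C ∉ S → ∃ X ∈ S, le (X.and C) B := by
    intro C hC
    by_contra hno
    have hle : S ⊆ {E | ∃ X ∈ S, le (X.and C) E} := fun X hX =>
      ⟨X, hX, L.base _ _ (.andE1 (.hyp rfl))⟩
    have := hmax.le_of_ge ⟨filGen L hF C, hno⟩ hle
    obtain ⟨X, hX⟩ := hF.ne
    exact hC (this ⟨X, hX, L.base _ _ (.andE2 (.hyp rfl))⟩)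
  obtain ⟨X, hX, hx⟩ := key C hcon.1
  obtain ⟨Y, hY, hy⟩ := key D hcon.2
  exact hB (hF.up _ _ (hF.meet _ _ (hF.meet _ _ hX hY) hCD)
    (L.tr _ _ _ (L.base _ _ (dist4 X Y C D)) (L.join _ _ _ hx hy)))

/-- Worlds of the canonical model. -/
structure IsWorld (S : Set PF) : Prop where
  ne : S.Nonempty
  up : ∀ C D, C ∈ S → BPC {C} D → D ∈ S
  meet : ∀ C D, C ∈ S → D ∈ S → C.and D ∈ S
  prime : ∀ C D, C.or D ∈ S → C ∈ S ∨ D ∈ S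
  cons : PF.bot ∉ S

theorem worldOf {le} (L : LatPre le) {A B} (h : ¬ le A B) :
    ∃ S, IsWorld S ∧ (∀ C D, C ∈ S → le C D → D ∈ S) ∧ A ∈ S ∧ B ∉ S := by
  obtain ⟨S, hF, hA, hB, hp⟩ := primeExt L h
  exact ⟨S, ⟨hF.ne, fun C D hC hd => hF.up _ _ hC (L.base _ _ hd), hF.meet, hp,
    fun hb => hB (hF.up _ _ hb (L.base _ _ (.exfalso trivial (.hyp rfl))))⟩, hF.up, hA, hB⟩

theorem IsWorld.up2 {S} (h : IsWorld S) {C D E} (hC : C ∈ S) (hD : D ∈ S)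
    (k : ∀ Γ, BPC Γ C → BPC Γ D → BPC Γ E) : E ∈ S :=
  h.up _ _ (h.meet _ _ hC hD) (k _ (.andE1 (.hyp rfl)) (.andE2 (.hyp rfl)))

theorem IsWorld.thm {S} (h : IsWorld S) {C} (k : BPC ∅ C) : C ∈ S := by
  obtain ⟨X, hX⟩ := h.ne
  exact h.up _ _ hX (dWeak k (by simp))

theorem latWorld {S} (h : IsWorld S) : LatPre (fun C D => C.imp D ∈ S) where
  base C D hd := h.thm (.impI (dWeak hd (by simp)))
  tr C D E h1 h2 := h.up2 h1 h2 fun _ a b => .fTr a b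
  meet C D E h1 h2 := h.up2 h1 h2 fun _ a b => .fAndI a b
  join C D E h1 h2 := h.up2 h1 h2 fun _ a b => .fOrE a b

theorem latSet (Γ : Set PF) : LatPre (fun C D => BPC (insert C Γ) D) where
  base C D hd := dWeak hd (by simp)
  tr C D E h1 h2 := dCut h1 (dWeak h2 (Set.insert_subset_insert (Set.subset_insert _ _)))
  meet C D E h1 h2 := .andI h1 h2
  join C D E h1 h2 := .orE (.hyp (Set.mem_insert _ _))
    (dWeak h1 (Set.insert_subset_insert (Set.subset_insert _ _)))
    (dWeak h2 (Set.insert_subset_insert (Set.subset_insert _ _)))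

/-- Canonical worlds. -/
abbrev CW : Type := {S : Set PF // IsWorld S}

/-- Canonical accessibility. -/
def CR (S T : CW) : Prop :=
  S.1 ⊆ T.1 ∧ ∀ A B, A.imp B ∈ S.1 → A ∈ T.1 → B ∈ T.1

/-- Each canonical world gets a dead-end twin (second component `true`). -/
def MR (x y : CW × Bool) : Prop :=
  x.2 = false ∧ (CR x.1 y.1 ∨ (x.1 = y.1 ∧ y.2 = true))

/-- Valuation of the modal model. -/
def MV (n : ℕ) (x : CW × Bool) : Prop := PF.atom n ∈ x.1.1

theorem CR.tr {S T U} (h : CR S T) (k : CR T U) : CR S U :=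
  ⟨h.1.trans k.1, fun A B hab ha => k.2 A B (h.1 hab) ha⟩

theorem MR.tr (x y z) (h : MR x y) (k : MR y z) : MR x z := by
  obtain ⟨h0, h⟩ := h
  obtain ⟨k0, k⟩ := k
  refine ⟨h0, ?_⟩
  rcases h with h | ⟨_, h⟩
  · rcases k with k | ⟨e, _⟩
    · exact .inl (h.tr k)
    · exact .inl (e ▸ h)
  · simp [k0] at h

theorem deadAll (S : CW) (A : PF) : Forces MR MV (S, true) (bhk A) := by
  have hb : ∀ X, Forces MR MV (S, true) (.box X) := fun X u hu => by simp [MR] at hu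
  induction A with
  | atom n => exact hb _
  | bot => exact hb _
  | imp A B => exact hb _
  | and A B iha ihb => exact ⟨iha, ihb⟩
  | or A B iha ihb => exact .inl iha

theorem truth (A : PF) : ∀ S : CW, Forces MR MV (S, false) (bhk A) ↔ A ∈ S.1 := by
  induction A with
  | atom n =>
    intro S
    refine ⟨fun h => h (S, true) ⟨rfl, .inr ⟨rfl, rfl⟩⟩, ?_⟩
    rintro h ⟨T, b⟩ ⟨_, hT | ⟨hT, _⟩⟩
    · exact hT.1 h
    · have hT : S = T := hT
      subst hT; exact h
  | bot =>
    intro S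
    exact ⟨fun h => (h (S, true) ⟨rfl, .inr ⟨rfl, rfl⟩⟩).elim, fun h => (S.2.cons h).elim⟩
  | and A B iha ihb =>
    intro S
    simp only [bhk, Forces, iha, ihb]
    exact ⟨fun h => S.2.meet _ _ h.1 h.2, fun h =>
      ⟨S.2.up _ _ h (.andE1 (.hyp rfl)), S.2.up _ _ h (.andE2 (.hyp rfl))⟩⟩
  | or A B iha ihb =>
    intro S
    simp only [bhk, Forces, iha, ihb]
    exact ⟨fun h => h.elim (fun h => S.2.up _ _ h (.orI1 (.hyp rfl)))
      (fun h => S.2.up _ _ h (.orI2 (.hyp rfl))), S.2.prime _ _⟩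
  | imp A B iha ihb =>
    intro S
    constructor
    · intro h
      by_contra hn
      obtain ⟨T, hT, hup, hA, hB⟩ := worldOf (latWorld S.2) hn
      refine hB ((ihb ⟨T, hT⟩).1 (h (⟨T, hT⟩, false) ⟨rfl, .inl ⟨?_, ?_⟩⟩
        ((iha ⟨T, hT⟩).2 hA)))
      · intro C hC
        exact hup A C hA (S.2.up _ _ hC (.impI (.hyp (by simp))))
      · intro C D hCD hC
        exact hup C D hC hCD
    · rintro h ⟨T, b⟩ hT hA
      cases b with
      | true => exact deadAll T B
      | false =>
        have hT : CR S T := by simpa [MR] using hT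
        exact (ihb T).2 (hT.2 A B h ((iha T).1 hA))

theorem bpcComplete {Γ : Set PF} {A : PF} (h : ModalConseq AxK4 (bhk '' Γ) (bhk A)) :
    BPC Γ A := by
  by_contra hn
  have hn' : ¬ BPC (insert PF.top Γ) A := fun h =>
    hn (dCut (.impI (.hyp (Set.mem_insert _ _))) h)
  obtain ⟨S, hS, hup, ht, hA⟩ := worldOf (latSet Γ) hn'
  obtain ⟨l, hl, hp⟩ := h
  refine hA ((truth A ⟨S, hS⟩).1 (k4Sound MR MR.tr MV hp _ ((forcesConj _ _ _ _).2 ?_)))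
  intro B hB
  obtain ⟨C, hC, rfl⟩ := hl B hB
  exact (truth C ⟨S, hS⟩).2 (hup _ _ ht (.hyp (Set.mem_insert_of_mem _ hC)))

end Helpers

-- STATEMENT 3
theorem stmt3 (Γ : Set PF) (A : PF) :
    BPC Γ A ↔ ModalConseq AxK4 (bhk '' Γ) (bhk A) := by
  exact ⟨bpcSound, bpcComplete⟩
end

section
/- For every set Γ of propositional formulas and every propositional formula A: Γ ⊢_EBPC A if and only if Γ^b ⊢_KD4 A^b. -/
namespace S4

/-! ### Modal side -/

theorem resp_conj {v : MF → Bool} (hv : MF.Respects v) (l : List MF) :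
    v (conjL l) = true ↔ ∀ B ∈ l, v B = true := by
  obtain ⟨h1, h2, h3, h4, h5⟩ := hv
  induction l with
  | nil => simp [conjL, h4, h1]
  | cons a l ih =>
    have : conjL (a :: l) = (a).and (conjL l) := rfl
    rw [this, h2]; simp [ih]

theorem resp_imp {v : MF → Bool} (hv : MF.Respects v) (A B : MF) :
    v (A.imp B) = true ↔ (v A = true → v B = true) := by
  rw [hv.2.2.2.1]; cases v A <;> simp

theorem resp_and {v : MF → Bool} (hv : MF.Respects v) (A B : MF) :
    v (A.and B) = true ↔ (v A = true ∧ v B = true) := by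
  rw [hv.2.1]; simp

theorem resp_or {v : MF → Bool} (hv : MF.Respects v) (A B : MF) :
    v (A.or B) = true ↔ (v A = true ∨ v B = true) := by
  rw [hv.2.2.1]; simp

theorem resp_neg {v : MF → Bool} (hv : MF.Respects v) (A : MF) :
    v (A.neg) = true ↔ ¬ (v A = true) := by
  rw [hv.2.2.2.2]; simp

theorem resp_bot {v : MF → Bool} (hv : MF.Respects v) :
    v MF.bot = true ↔ False := by
  rw [hv.1]; simp

abbrev P := Prv AxKD4
abbrev MC := ModalConseq AxKD4

theorem prv1 {X Y : MF} (h : ∀ v, MF.Respects v → v X = true → v Y = true) (hX : P X) : P Y :=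
  Prv.mp (Prv.taut (fun v hv => by rw [resp_imp hv]; exact h v hv)) hX

theorem prv2 {X Y Z : MF} (h : ∀ v, MF.Respects v → v X = true → v Y = true → v Z = true)
    (hX : P X) (hY : P Y) : P Z :=
  Prv.mp (Prv.mp (Prv.taut (fun v hv => by rw [resp_imp hv, resp_imp hv]; exact h v hv)) hX) hY

theorem mc_of_prv {Γ : Set MF} {X : MF} (h : P X) : MC Γ X :=
  ⟨[], by simp, prv1 (fun v hv hx => by rw [resp_imp hv]; exact fun _ => hx) h⟩

theorem mc2 {Γ : Set MF} {X Y Z : MF}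
    (h : ∀ v, MF.Respects v → v X = true → v Y = true → v Z = true)
    (hX : MC Γ X) (hY : MC Γ Y) : MC Γ Z := by
  obtain ⟨l, hl, pl⟩ := hX
  obtain ⟨m, hm, pm⟩ := hY
  refine ⟨l ++ m, ?_, prv2 ?_ pl pm⟩
  · intro B hB
    rcases List.mem_append.1 hB with h | h
    · exact hl B h
    · exact hm B h
  · intro v hv
    rw [resp_imp hv, resp_imp hv, resp_imp hv, resp_conj hv, resp_conj hv, resp_conj hv]
    intro a b c
    exact h v hv (a fun B hB => c B (List.mem_append_left _ hB))
      (b fun B hB => c B (List.mem_append_right _ hB))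

theorem mc1 {Γ : Set MF} {X Y : MF}
    (h : ∀ v, MF.Respects v → v X = true → v Y = true)
    (hX : MC Γ X) : MC Γ Y := mc2 (fun v hv a _ => h v hv a) hX hX

theorem mc_mp {Γ : Set MF} {X Y : MF} (h : MC Γ (X.imp Y)) (hX : MC Γ X) : MC Γ Y :=
  mc2 (fun v hv a b => by rw [resp_imp hv] at a; exact a b) h hX

theorem mc_hyp {Γ : Set MF} {X : MF} (h : X ∈ Γ) : MC Γ X :=
  ⟨[X], by simpa using h, Prv.taut (fun v hv => by
    rw [resp_imp hv, resp_conj hv]; simp)⟩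

theorem mc_ded {Γ : Set MF} {X Y : MF} (h : MC (insert X Γ) Y) : MC Γ (X.imp Y) := by
  obtain ⟨l, hl, pl⟩ := h
  refine ⟨l.filter (fun B => decide (B ≠ X)), ?_, prv1 ?_ pl⟩
  · intro B hB
    rw [List.mem_filter] at hB
    have := hl B hB.1
    have h2 : B ≠ X := by simpa using hB.2
    exact this.resolve_left h2
  · intro v hv
    rw [resp_imp hv, resp_imp hv, resp_imp hv, resp_conj hv, resp_conj hv]
    intro a b c
    refine a fun B hB => ?_
    by_cases hBX : B = X
    · rw [hBX]; exact c
    · exact b B (List.mem_filter.2 ⟨hB, by simpa using hBX⟩)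

theorem box_mono {X Y : MF} (h : P (X.imp Y)) : P (X.box.imp Y.box) :=
  Prv.mp Prv.axK (Prv.nec h)

theorem box_mono2 {X Y Z : MF} (h : P (X.imp (Y.imp Z))) :
    P (X.box.imp (Y.box.imp Z.box)) :=
  prv2 (fun v hv a b => by
    simp only [resp_imp hv] at *; exact fun x => b (a x)) (box_mono h) Prv.axK

theorem ax4 (X : MF) : P (X.box.imp X.box.box) := Prv.extra (Or.inl ⟨X, rfl⟩)
theorem axD : P (MF.neg (MF.box MF.bot)) := Prv.extra (Or.inr rfl)

theorem bhk_box (A : PF) : P ((bhk A).imp (bhk A).box) := by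
  induction A with
  | atom n => exact ax4 _
  | bot => exact ax4 _
  | imp A B => exact ax4 _
  | and A B ha hb =>
    have h : P ((bhk A).box.imp ((bhk B).box.imp ((bhk A).and (bhk B)).box)) :=
      box_mono2 (Prv.taut fun v hv => by
        simp only [resp_imp hv, resp_and hv]; tauto)
    refine prv2 (fun v hv a b => ?_) (prv2 (Z := ((bhk A).and (bhk B)).imp ((bhk A).box.and (bhk B).box)) (fun v hv a b => ?_) ha hb) h
    · simp only [bhk, resp_imp hv, resp_and hv] at *; tauto
    · simp only [resp_imp hv, resp_and hv] at *; tauto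
  | or A B ha hb =>
    have h1 : P ((bhk A).box.imp ((bhk A).or (bhk B)).box) :=
      box_mono (Prv.taut fun v hv => by
        simp only [resp_imp hv, resp_or hv]; tauto)
    have h2 : P ((bhk B).box.imp ((bhk A).or (bhk B)).box) :=
      box_mono (Prv.taut fun v hv => by
        simp only [resp_imp hv, resp_or hv]; tauto)
    have h3 : P ((bhk A).imp ((bhk A).or (bhk B)).box) :=
      prv2 (fun v hv a b => by simp only [resp_imp hv] at *; tauto) ha h1
    have h4 : P ((bhk B).imp ((bhk A).or (bhk B)).box) :=
      prv2 (fun v hv a b => by simp only [resp_imp hv] at *; tauto) hb h2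
    exact prv2 (fun v hv a b => by
      simp only [bhk, resp_imp hv, resp_or hv] at *; tauto) h3 h4

theorem conj_box (l : List MF) (hl : ∀ B ∈ l, P (B.imp B.box)) :
    P ((conjL l).imp (conjL l).box) := by
  induction l with
  | nil =>
    have : P (conjL []).box := Prv.nec (Prv.taut fun v hv => by
      rw [resp_conj hv]; simp)
    exact prv1 (fun v hv a => by rw [resp_imp hv]; exact fun _ => a) this
  | cons X l ih =>
    have hX := hl X (by simp)
    have hY := ih (fun B hB => hl B (by simp [hB]))
    have h : P (X.box.imp ((conjL l).box.imp (X.and (conjL l)).box)) :=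
      box_mono2 (Prv.taut fun v hv => by
        simp only [resp_imp hv, resp_and hv]; tauto)
    change P ((X.and (conjL l)).imp (X.and (conjL l)).box)
    refine prv2 (fun v hv a b => ?_) (prv2 (Z := (X.and (conjL l)).imp (X.box.and (conjL l).box)) (fun v hv a b => ?_) hX hY) h
    · simp only [resp_imp hv, resp_and hv] at *; tauto
    · simp only [resp_imp hv, resp_and hv] at *; tauto

theorem mc_box {Γ : Set PF} {X : MF} (h : MC (bhk '' Γ) X) : MC (bhk '' Γ) X.box := by
  obtain ⟨l, hl, pl⟩ := h
  refine ⟨l, hl, ?_⟩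
  have := conj_box l (fun B hB => by
    obtain ⟨A, _, rfl⟩ := hl B hB; exact bhk_box A)
  exact prv2 (fun v hv a b => by simp only [resp_imp hv] at *; tauto) this (box_mono pl)

theorem mc_box2 {Γ : Set MF} {X Y Z : MF}
    (h : ∀ v, MF.Respects v → v X = true → v Y = true → v Z = true)
    (hX : MC Γ X.box) (hY : MC Γ Y.box) : MC Γ Z.box := by
  have : P (X.box.imp (Y.box.imp Z.box)) := box_mono2 (Prv.taut fun v hv => by
    simp only [resp_imp hv]; exact h v hv)
  exact mc_mp (mc_mp (mc_of_prv this) hX) hY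

theorem forward {Γ : Set PF} {A : PF} (h : EBPC Γ A) : MC (bhk '' Γ) (bhk A) := by
  unfold EBPC at h
  induction h with
  | hyp h => exact mc_hyp ⟨_, h, rfl⟩
  | andI _ _ h1 h2 => exact mc2 (fun v hv a b => by
      simp only [bhk, resp_and hv]; exact ⟨a, b⟩) h1 h2
  | andE1 _ h => exact mc1 (fun v hv a => by
      simp only [bhk, resp_and hv] at a; exact a.1) h
  | andE2 _ h => exact mc1 (fun v hv a => by
      simp only [bhk, resp_and hv] at a; exact a.2) h
  | orI1 _ h => exact mc1 (fun v hv a => by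
      simp only [bhk, resp_or hv]; exact Or.inl a) h
  | orI2 _ h => exact mc1 (fun v hv a => by
      simp only [bhk, resp_or hv]; exact Or.inr a) h
  | @orE Γ A B C _ _ _ h h1 h2 =>
    rw [Set.image_insert_eq] at h1 h2
    have h1 := mc_ded h1
    have h2 := mc_ded h2
    have h3 : MC (bhk '' Γ) ((bhk (A.or B)).imp (bhk C)) := mc2 (fun v hv a b => by
      simp only [bhk, resp_or hv, resp_imp hv] at *; tauto) h1 h2
    exact mc_mp h3 h
  | impI _ h =>
    rw [Set.image_insert_eq] at h
    exact mc_box (mc_ded h)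
  | exfalso _ _ h =>
    exact mc2 (fun v hv a b => by
      simp only [bhk, resp_neg hv] at *; exact absurd b a) (mc_of_prv axD) h
  | fAndI _ _ h1 h2 => exact mc_box2 (fun v hv a b => by
      simp only [bhk, resp_imp hv, resp_and hv] at *; tauto) h1 h2
  | fOrE _ _ h1 h2 => exact mc_box2 (fun v hv a b => by
      simp only [bhk, resp_imp hv, resp_or hv] at *; tauto) h1 h2
  | fTr _ _ h1 h2 => exact mc_box2 (fun v hv a b => by
      simp only [resp_imp hv] at *; tauto) h1 h2
  | @extra Γ ps c hr _ h =>
    obtain ⟨A, rfl, rfl⟩ := hr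
    have h1 := mc_box (h A (by simp))
    have h2 := h A.neg (by simp)
    have h3 : MC (bhk '' Γ) (MF.bot).box.box := mc_box2 (fun v hv a b => by
      rw [resp_imp hv] at a; exact a b) h2 h1
    have h4 : P ((MF.bot.box).imp MF.bot) := prv1 (fun v hv a => by
      simp only [resp_imp hv, resp_neg hv] at *; tauto) axD
    exact mc_mp (mc_of_prv (box_mono h4)) h3

/-! ### Soundness of KD4 -/

theorem sound {W : Type} (R : W → W → Prop) (V : ℕ → W → Prop)
    (htr : ∀ x y z, R x y → R y z → R x z) (hser : ∀ x, ∃ y, R x y) {A : MF} (h : P A) :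
    ∀ w, Forces R V w A := by
  classical
  induction h with
  | @taut A h =>
    intro w
    have := h (fun B => decide (Forces R V w B)) (by
      refine ⟨decide_eq_false (fun h => h), ?_, ?_, ?_, ?_⟩ <;> intros <;> rw [Bool.eq_iff_iff] <;>
        simp only [decide_eq_true_iff, Bool.and_eq_true, Bool.or_eq_true, Bool.not_eq_true',
          decide_eq_false_iff_not] <;> simp only [Forces] <;> tauto)
    exact of_decide_eq_true this
  | axK => intro w h1 h2 u hu; exact h1 u hu (h2 u hu)
  | extra h =>
    intro w
    rcases h with ⟨B, rfl⟩ | rfl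
    · intro h u hu x hx; exact h x (htr _ _ _ hu hx)
    · intro h; obtain ⟨y, hy⟩ := hser w; exact h y hy
  | mp _ _ h1 h2 => intro w; exact h1 w (h2 w)
  | nec _ h => intro w u _; exact h u

theorem forces_conj {W : Type} (R : W → W → Prop) (V : ℕ → W → Prop) (w : W) (l : List MF)
    (h : ∀ B ∈ l, Forces R V w B) : Forces R V w (conjL l) := by
  induction l with
  | nil => exact fun h => h
  | cons X l ih => exact ⟨h X (by simp), ih fun B hB => h B (by simp [hB])⟩

/-! ### EBPC side -/

theorem weak {Γ Δ : Set PF} {A : PF} (h : EBPC Γ A) (hs : Γ ⊆ Δ) : EBPC Δ A := by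
  unfold EBPC at *
  induction h generalizing Δ with
  | hyp h => exact .hyp (hs h)
  | andI _ _ h1 h2 => exact .andI (h1 hs) (h2 hs)
  | andE1 _ h => exact .andE1 (h hs)
  | andE2 _ h => exact .andE2 (h hs)
  | orI1 _ h => exact .orI1 (h hs)
  | orI2 _ h => exact .orI2 (h hs)
  | orE _ _ _ h h1 h2 =>
    exact .orE (h hs) (h1 (Set.insert_subset_insert hs)) (h2 (Set.insert_subset_insert hs))
  | impI _ h => exact .impI (h (Set.insert_subset_insert hs))
  | exfalso t _ h => exact .exfalso t (h hs)
  | fAndI _ _ h1 h2 => exact .fAndI (h1 hs) (h2 hs)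
  | fOrE _ _ h1 h2 => exact .fOrE (h1 hs) (h2 hs)
  | fTr _ _ h1 h2 => exact .fTr (h1 hs) (h2 hs)
  | extra hr _ h => exact .extra hr (fun p hp => h p hp hs)

theorem cut {Γ : Set PF} {A B : PF} (h : EBPC Γ A) (h2 : EBPC (insert A Γ) B) : EBPC Γ B :=
  Deriv.orE (Deriv.orI1 (B := A) h) h2 h2

theorem cut1 {Γ : Set PF} {A B : PF} (h : EBPC Γ A) (h2 : EBPC {A} B) : EBPC Γ B :=
  cut h (weak h2 (by simp))

theorem ctop (Γ : Set PF) : EBPC Γ PF.top := Deriv.impI (Deriv.hyp (by simp))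

theorem e1 {A B : PF} : EBPC {A.and B} A := Deriv.andE1 (B := B) (Deriv.hyp rfl)
theorem e2 {A B : PF} : EBPC {A.and B} B := Deriv.andE2 (A := A) (Deriv.hyp rfl)

theorem prime_ext (le : PF → PF → Prop) (h1 : ∀ C D, EBPC {C} D → le C D)
    (tr : ∀ C D E, le C D → le D E → le C E)
    (hand : ∀ C D E, le C D → le C E → le C (D.and E))
    (hor : ∀ C D E, le C E → le D E → le (C.or D) E)
    (A B : PF) (hAB : ¬ le A B) :
    ∃ S : Set PF, (∀ C D, C ∈ S → le C D → D ∈ S) ∧ (∀ C D, C ∈ S → D ∈ S → C.and D ∈ S) ∧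
      (∀ C D, C.or D ∈ S → C ∈ S ∨ D ∈ S) ∧ A ∈ S ∧ B ∉ S := by
  let F : Set (Set PF) := {S | (∀ C D, C ∈ S → le C D → D ∈ S) ∧
    (∀ C D, C ∈ S → D ∈ S → C.and D ∈ S) ∧ B ∉ S}
  have hrefl : ∀ C, le C C := fun C => h1 _ _ (Deriv.hyp rfl)
  have hS0 : {D | le A D} ∈ F :=
    ⟨fun C D hC hD => tr _ _ _ hC hD, fun C D hC hD => hand _ _ _ hC hD, hAB⟩
  obtain ⟨S, hle, hS⟩ := zorn_subset_nonempty F (by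
    intro c hc hch hne
    refine ⟨⋃₀ c, ⟨?_, ?_, ?_⟩, fun s hs => Set.subset_sUnion_of_mem hs⟩
    · rintro C D ⟨s, hs, hC⟩ hCD
      exact ⟨s, hs, (hc hs).1 C D hC hCD⟩
    · rintro C D ⟨s, hs, hC⟩ ⟨t, ht, hD⟩
      rcases hch.total hs ht with h | h
      · exact ⟨t, ht, (hc ht).2.1 C D (h hC) hD⟩
      · exact ⟨s, hs, (hc hs).2.1 C D hC (h hD)⟩
    · rintro ⟨s, hs, hB⟩
      exact (hc hs).2.2 hB) _ hS0
  obtain ⟨hup, hcl, hB⟩ := hS.prop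
  have hAS : A ∈ S := hle (hrefl A)
  have key : ∀ C, C ∉ S → ∃ s ∈ S, le (s.and C) B := by
    intro C hC
    by_contra hno
    push Not at hno
    have hT : {D | ∃ s ∈ S, le (s.and C) D} ∈ F := by
      refine ⟨?_, ?_, ?_⟩
      · rintro D E ⟨s, hs, hD⟩ hDE
        exact ⟨s, hs, tr _ _ _ hD hDE⟩
      · rintro D E ⟨s, hs, hD⟩ ⟨t, ht, hE⟩
        refine ⟨s.and t, hcl _ _ hs ht, hand _ _ _ (tr _ _ _ (h1 _ _ ?_) hD)
          (tr _ _ _ (h1 _ _ ?_) hE)⟩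
        · exact Deriv.andI (Deriv.andE1 e1) e2
        · exact Deriv.andI (Deriv.andE2 e1) e2
      · rintro ⟨s, hs, h⟩
        exact hno s hs h
    have hsub : S ⊆ {D | ∃ s ∈ S, le (s.and C) D} := fun s hs => ⟨s, hs, h1 _ _ e1⟩
    have := hS.le_of_ge hT hsub
    exact hC (this ⟨A, hAS, h1 _ _ e2⟩)
  refine ⟨S, hup, hcl, ?_, hAS, hB⟩
  intro C D hCD
  by_contra hno
  push Not at hno
  obtain ⟨s, hs, h⟩ := key C hno.1
  obtain ⟨t, ht, h'⟩ := key D hno.2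
  refine hB (hup _ _ (hcl _ _ (hcl _ _ hs ht) hCD) (tr _ _ _ (h1 _ _ ?_) (hor _ _ _ h h')))
  refine Deriv.orE e2 (Deriv.orI1 (Deriv.andI ?_ ?_)) (Deriv.orI2 (Deriv.andI ?_ ?_))
  · exact Deriv.andE1 (weak (e1 (A := s.and t) (B := C.or D)) (by simp))
  · exact Deriv.hyp (by simp)
  · exact Deriv.andE2 (weak (e1 (A := s.and t) (B := C.or D)) (by simp))
  · exact Deriv.hyp (by simp)

structure World where
  S : Set PF
  up : ∀ C D, C ∈ S → EBPC {C} D → D ∈ S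
  cl : ∀ C D, C ∈ S → D ∈ S → C.and D ∈ S
  prime : ∀ C D, C.or D ∈ S → C ∈ S ∨ D ∈ S
  top : PF.top ∈ S
  bot : PF.bot ∉ S

def World.R (x y : World) : Prop := ∀ C D, C.imp D ∈ x.S → C ∈ y.S → D ∈ y.S

theorem World.up2 (x : World) {C D E : PF} (hC : C ∈ x.S) (hD : D ∈ x.S)
    (h : EBPC {C.and D} E) : E ∈ x.S := x.up _ _ (x.cl _ _ hC hD) h

theorem World.thm (x : World) {C : PF} (h : EBPC ∅ C) : C ∈ x.S :=
  x.up _ _ x.top (weak h (by simp))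

theorem World.R_sub {x y : World} (h : x.R y) : x.S ⊆ y.S := fun C hC =>
  h PF.top C (x.up _ _ hC (Deriv.impI (Deriv.hyp (by simp)))) y.top

theorem World.R_trans {x y z : World} (h : x.R y) (h2 : y.R z) : x.R z :=
  fun C D hCD hC => h2 C D (World.R_sub h hCD) hC

theorem World.ext_imp (x : World) (A B : PF) (h : A.imp B ∉ x.S) :
    ∃ y : World, x.R y ∧ A ∈ y.S ∧ B ∉ y.S := by
  have h1 : ∀ C D, EBPC {C} D → C.imp D ∈ x.S := fun C D h =>
    x.thm (Deriv.impI (weak h (by simp)))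
  obtain ⟨S, hup, hcl, hpr, hA, hB⟩ := prime_ext (fun C D => C.imp D ∈ x.S)
    h1
    (fun C D E a b => x.up2 a b (Deriv.fTr e1 e2))
    (fun C D E a b => x.up2 a b (Deriv.fAndI e1 e2))
    (fun C D E a b => x.up2 a b (Deriv.fOrE e1 e2)) A B h
  refine ⟨⟨S, fun C D hC hD => hup C D hC (h1 _ _ hD), hcl, hpr, hup _ _ hA (h1 _ _ (ctop _)),
    fun hb => hB (hup _ _ hb (h1 _ _ (Deriv.exfalso trivial (Deriv.hyp rfl))))⟩,
    fun C D a b => hup C D b a, hA, hB⟩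

theorem World.ser (x : World) : ∃ y, x.R y := by
  obtain ⟨y, hy, _⟩ := x.ext_imp PF.top PF.bot (fun h => x.bot (x.up2 x.top h
    (Deriv.extra (ps := [PF.top, PF.top.neg]) ⟨PF.top, rfl, rfl⟩ (by
      intro p hp
      simp only [List.mem_cons, List.not_mem_nil, or_false] at hp
      rcases hp with rfl | rfl
      · exact e1
      · exact e2))))
  exact ⟨y, hy⟩

theorem World.exists {Γ : Set PF} {A : PF} (h : ¬ EBPC Γ A) :
    ∃ x : World, Γ ⊆ x.S ∧ A ∉ x.S := by
  have h1 : ∀ C D, EBPC {C} D → EBPC (insert C Γ) D := fun C D h => weak h (by simp)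
  obtain ⟨S, hup, hcl, hpr, hT, hB⟩ := prime_ext (fun C D => EBPC (insert C Γ) D)
    h1
    (fun C D E a b => cut a (weak b (Set.insert_subset_insert (Set.subset_insert _ _))))
    (fun C D E a b => Deriv.andI a b)
    (fun C D E a b => Deriv.orE (A := C) (B := D) (Deriv.hyp (by simp))
      (weak a (Set.insert_subset_insert (Set.subset_insert _ _)))
      (weak b (Set.insert_subset_insert (Set.subset_insert _ _))))
    PF.top A (fun hh => h (cut (ctop _) hh))
  exact ⟨⟨S, fun C D hC hD => hup C D hC (h1 _ _ hD), hcl, hpr, hT,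
    fun hb => hB (hup _ _ hb (h1 _ _ (Deriv.exfalso trivial (Deriv.hyp rfl))))⟩,
    fun C hC => hup _ _ hT (Deriv.hyp (by simp [hC])), hB⟩

def RR (a b : World × World) : Prop := (b.1 = a.2 ∨ a.2.R b.1) ∧ b.1.R b.2
def VV (n : ℕ) (a : World × World) : Prop := PF.atom n ∈ a.1.S

theorem RR_R {a b : World × World} (h : RR a b) : a.2.R b.2 := by
  obtain ⟨h | h, h2⟩ := h
  · rw [← h]; exact h2
  · exact World.R_trans h h2

theorem truth (A : PF) : ∀ a : World × World, Forces RR VV a (bhk A) ↔ A ∈ a.2.S := by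
  induction A with
  | atom n =>
    intro a
    constructor
    · intro h
      obtain ⟨y, hy⟩ := a.2.ser
      exact h (a.2, y) ⟨Or.inl rfl, hy⟩
    · rintro h b ⟨h1 | h1, _⟩
      · change _ ∈ b.1.S
        rw [h1]; exact h
      · exact World.R_sub h1 h
  | bot =>
    intro a
    constructor
    · intro h
      obtain ⟨y, hy⟩ := a.2.ser
      exact (h (a.2, y) ⟨Or.inl rfl, hy⟩).elim
    · intro h; exact absurd h a.2.bot
  | and A B ha hb =>
    intro a
    change (_ ∧ _) ↔ _
    rw [ha, hb]
    exact ⟨fun h => a.2.cl _ _ h.1 h.2, fun h => ⟨a.2.up _ _ h e1, a.2.up _ _ h e2⟩⟩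
  | or A B ha hb =>
    intro a
    change (_ ∨ _) ↔ _
    rw [ha, hb]
    refine ⟨?_, fun h => a.2.prime _ _ h⟩
    rintro (h | h)
    · exact a.2.up _ _ h (Deriv.orI1 (Deriv.hyp rfl))
    · exact a.2.up _ _ h (Deriv.orI2 (Deriv.hyp rfl))
  | imp A B ha hb =>
    intro a
    change (∀ b, RR a b → (Forces RR VV b (bhk A) → Forces RR VV b (bhk B))) ↔ _
    constructor
    · intro h
      by_contra hn
      obtain ⟨y, hy, hA, hB⟩ := a.2.ext_imp A B hn
      have := h (a.2, y) ⟨Or.inl rfl, hy⟩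
      rw [ha, hb] at this
      exact hB (this hA)
    · intro h b hab
      rw [ha, hb]
      exact RR_R hab A B h

theorem backward {Γ : Set PF} {A : PF} (h : MC (bhk '' Γ) (bhk A)) : EBPC Γ A := by
  by_contra hn
  obtain ⟨x, hx, hA⟩ := World.exists hn
  obtain ⟨l, hl, pl⟩ := h
  have := sound RR VV
    (fun a b c hab hbc => ⟨by
      rcases hbc.1 with h | h
      · rw [h]; exact Or.inr (RR_R hab)
      · exact Or.inr (World.R_trans (RR_R hab) h), hbc.2⟩)
    (fun a => by
      obtain ⟨y, hy⟩ := a.2.ser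
      exact ⟨(a.2, y), Or.inl rfl, hy⟩) pl (x, x)
  refine hA ((truth A (x, x)).1 (this (forces_conj _ _ _ _ ?_)))
  intro B hB
  obtain ⟨C, hC, rfl⟩ := hl B hB
  exact (truth C (x, x)).2 (hx hC)

end S4

-- STATEMENT 4
theorem stmt4 (Γ : Set PF) (A : PF) :
    EBPC Γ A ↔ ModalConseq AxKD4 (bhk '' Γ) (bhk A) :=
  ⟨S4.forward, S4.backward⟩
end
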